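/- Let A, Θ, M be nonempty finite sets with |M| ≥ 2|Θ|. There exists a set 𝒰_R ⊆ ℝ^{A×Θ} whose complement is Lebesgue-null and nowhere dense such that for every u_R ∈ 𝒰_R, every state-independent sender utility u_S ∈ ℝ^A, and every prior μ0 ∈ ΔΘ, the limit of the infimum χ-PBE sender payoffs satisfies lim_{χ↗1} w*_χ(μ0) = v̂(μ0) (strong robustness of the Bayesian persuasion value to partial credibility). -/

import Mathlib

open MeasureTheory Filter Topology

/-- A probability vector on a finite set. -/
def IsDist {X : Type*} [Fintype X] (f : X → ℝ) : Prop :=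
  (∀ x, 0 ≤ f x) ∧ ∑ x, f x = 1

/-- An experiment (official reporting protocol): a state-contingent distribution over
messages. -/
def IsExperiment {Θ M : Type*} [Fintype M] (ψ : Θ → M → ℝ) : Prop :=
  ∀ θ, IsDist (ψ θ)

/-- The receiver's best responses `A*_R(μ)` to a belief vector `μ` on a finite state
space. -/
def BRf {A Θ : Type*} [Fintype Θ] (uR : A → Θ → ℝ) (μ : Θ → ℝ) : Set A :=
  {a | ∀ a' : A, ∑ θ, uR a' θ * μ θ ≤ ∑ θ, uR a θ * μ θ}

/-- The belief simplex `ΔΘ` over a finite state space, viewed as a subspace of `ℝ^Θ`. -/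
abbrev Belief (Θ : Type*) [Fintype Θ] : Type _ := {f : Θ → ℝ // f ∈ stdSimplex ℝ Θ}

/-- The sender's upper value function `v(μ) = max_{a ∈ A*_R(μ)} u_S(a)` (state-independent
sender utility). -/
noncomputable def vG {A Θ : Type*} [Fintype Θ] (uS : A → ℝ) (uR : A → Θ → ℝ)
    (μ : Θ → ℝ) : ℝ :=
  sSup (uS '' BRf uR μ)

/-- The sender's lower value function `w(μ) = min_{a ∈ A*_R(μ)} u_S(a)`. -/
noncomputable def wG {A Θ : Type*} [Fintype Θ] (uS : A → ℝ) (uR : A → Θ → ℝ)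
    (μ : Θ → ℝ) : ℝ :=
  sInf (uS '' BRf uR μ)

/-- The set `I(μ0)` of information policies: Borel probability measures on the belief
simplex whose barycenter is the prior `μ0`. -/
def IPolF {Θ : Type*} [Fintype Θ] (μ0 : Θ → ℝ) : Set (ProbabilityMeasure (Belief Θ)) :=
  {p | ∀ θ : Θ, ∫ μ, (μ : Belief Θ).1 θ ∂(p : Measure (Belief Θ)) = μ0 θ}

/-- `v̂(μ0)`: the sender's Bayesian persuasion value. -/
noncomputable def vHatG {A Θ : Type*} [Fintype Θ] (uS : A → ℝ) (uR : A → Θ → ℝ)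
    (μ0 : Θ → ℝ) : ℝ :=
  sSup ((fun p : ProbabilityMeasure (Belief Θ) =>
    ∫ μ, vG uS uR (μ : Belief Θ).1 ∂(p : Measure (Belief Θ))) '' IPolF μ0)

/-- `ŵ(μ0)`: the sender's worst equilibrium value under full commitment. -/
noncomputable def wHatG {A Θ : Type*} [Fintype Θ] (uS : A → ℝ) (uR : A → Θ → ℝ)
    (μ0 : Θ → ℝ) : ℝ :=
  sSup ((fun p : ProbabilityMeasure (Belief Θ) =>
    ∫ μ, wG uS uR (μ : Belief Θ).1 ∂(p : Measure (Belief Θ))) '' IPolF μ0)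

/-- The sender's expected payoff in the partial-credibility game from (provisionally)
choosing experiment `ψ'`, given influencing strategy `σ` and receiver strategy `α`. -/
noncomputable def chiValue {A Θ M : Type*} [Fintype A] [Fintype Θ] [Fintype M]
    (uS : A → ℝ) (μ0 : Θ → ℝ) (χ : ℝ)
    (σ : Θ → (Θ → M → ℝ) → M → ℝ) (α : M → (Θ → M → ℝ) → A → ℝ)
    (ψ' : Θ → M → ℝ) : ℝ :=
  ∑ θ, μ0 θ * ∑ m, (χ * ψ' θ m + (1 - χ) * σ θ ψ' m) * ∑ a, uS a * α m ψ' a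

/-- Perfect Bayesian `χ`-equilibrium of the partial-credibility persuasion game. -/
def IsChiPBE {A Θ M : Type*} [Fintype A] [Fintype Θ] [Fintype M]
    (uS : A → ℝ) (uR : A → Θ → ℝ) (μ0 : Θ → ℝ) (χ : ℝ)
    (ψ : Θ → M → ℝ) (σ : Θ → (Θ → M → ℝ) → M → ℝ)
    (α : M → (Θ → M → ℝ) → A → ℝ) (β : M → (Θ → M → ℝ) → Θ → ℝ) : Prop :=
  IsExperiment ψ ∧
  (∀ ψ' : Θ → M → ℝ, IsExperiment ψ' → ∀ θ, IsDist (σ θ ψ')) ∧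
  (∀ ψ' : Θ → M → ℝ, IsExperiment ψ' → ∀ m, IsDist (α m ψ')) ∧
  (∀ ψ' : Θ → M → ℝ, IsExperiment ψ' → ∀ m, IsDist (β m ψ')) ∧
  -- (1) the sender's experiment choice is optimal
  (∀ ψ' : Θ → M → ℝ, IsExperiment ψ' →
    chiValue uS μ0 χ σ α ψ' ≤ chiValue uS μ0 χ σ α ψ) ∧
  -- (2) the receiver best responds to his beliefs
  (∀ ψ' : Θ → M → ℝ, IsExperiment ψ' → ∀ (m : M) (a : A),
    α m ψ' a ≠ 0 → a ∈ BRf uR (β m ψ')) ∧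
  -- (3) beliefs are Bayesian
  (∀ ψ' : Θ → M → ℝ, IsExperiment ψ' → ∀ (m : M) (θ : Θ),
    β m ψ' θ * (∑ θ', μ0 θ' * (χ * ψ' θ' m + (1 - χ) * σ θ' ψ' m)) =
      μ0 θ * (χ * ψ' θ m + (1 - χ) * σ θ ψ' m)) ∧
  -- (4) the influencing sender's message choice is optimal
  (∀ ψ' : Θ → M → ℝ, IsExperiment ψ' → ∀ (θ : Θ) (m : M), σ θ ψ' m ≠ 0 →
    ∀ m' : M, ∑ a, uS a * α m' ψ' a ≤ ∑ a, uS a * α m ψ' a)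

/-- The set of sender `χ`-PBE payoffs. -/
def chiPBEPayoffs (A : Type*) {Θ : Type*} (M : Type*) [Fintype A] [Fintype Θ] [Fintype M]
    (uS : A → ℝ) (uR : A → Θ → ℝ) (μ0 : Θ → ℝ) (χ : ℝ) : Set ℝ :=
  {s | ∃ (ψ : Θ → M → ℝ) (σ : Θ → (Θ → M → ℝ) → M → ℝ)
      (α : M → (Θ → M → ℝ) → A → ℝ) (β : M → (Θ → M → ℝ) → Θ → ℝ),
    IsChiPBE uS uR μ0 χ ψ σ α β ∧ s = chiValue uS μ0 χ σ α ψ}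

/-- `w*_χ(μ0)`: the infimum sender `χ`-PBE payoff. -/
noncomputable def wStar (A : Type*) {Θ : Type*} (M : Type*)
    [Fintype A] [Fintype Θ] [Fintype M]
    (uS : A → ℝ) (uR : A → Θ → ℝ) (μ0 : Θ → ℝ) (χ : ℝ) : ℝ :=
  sInf (chiPBEPayoffs A M uS uR μ0 χ)


/-! ### Basic facts on best responses -/

lemma BRf_nonempty {A Θ : Type*} [Fintype A] [Nonempty A] [Fintype Θ] (uR : A → Θ → ℝ)
    (x : Θ → ℝ) : (BRf uR x).Nonempty := by
  obtain ⟨a, ha⟩ := Finite.exists_max (fun a => ∑ θ, uR a θ * x θ)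
  exact ⟨a, fun a' => ha a'⟩

lemma exists_vG {A Θ : Type*} [Fintype A] [Nonempty A] [Fintype Θ] (uS : A → ℝ)
    (uR : A → Θ → ℝ) (x : Θ → ℝ) :
    ∃ a ∈ BRf uR x, uS a = vG uS uR x :=
  ((BRf_nonempty uR x).image uS).csSup_mem (Set.toFinite _)

lemma exists_wG {A Θ : Type*} [Fintype A] [Nonempty A] [Fintype Θ] (uS : A → ℝ)
    (uR : A → Θ → ℝ) (x : Θ → ℝ) :
    ∃ a ∈ BRf uR x, uS a = wG uS uR x :=
  ((BRf_nonempty uR x).image uS).csInf_mem (Set.toFinite _)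

lemma le_vG {A Θ : Type*} [Fintype A] [Fintype Θ] (uS : A → ℝ)
    (uR : A → Θ → ℝ) (x : Θ → ℝ) {a : A} (ha : a ∈ BRf uR x) : uS a ≤ vG uS uR x :=
  le_csSup (Set.toFinite _).bddAbove ⟨a, ha, rfl⟩

lemma wG_le {A Θ : Type*} [Fintype A] [Fintype Θ] (uS : A → ℝ)
    (uR : A → Θ → ℝ) (x : Θ → ℝ) {a : A} (ha : a ∈ BRf uR x) : wG uS uR x ≤ uS a :=
  csInf_le (Set.toFinite _).bddBelow ⟨a, ha, rfl⟩

lemma exists_bound {A : Type*} [Fintype A] (uS : A → ℝ) :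
    ∃ C : ℝ, 0 ≤ C ∧ ∀ a, |uS a| ≤ C := by
  refine ⟨∑ a, |uS a|, Finset.sum_nonneg fun a _ => abs_nonneg _, fun a => ?_⟩
  exact Finset.single_le_sum (f := fun a => |uS a|) (fun a _ => abs_nonneg _) (Finset.mem_univ a)

lemma BRf_smul {A Θ : Type*} [Fintype Θ] (uR : A → Θ → ℝ) (x : Θ → ℝ) {c : ℝ} (hc : 0 < c) :
    BRf uR (fun θ => c * x θ) = BRf uR x := by
  ext a
  have h : ∀ b, ∑ θ, uR b θ * (c * x θ) = c * ∑ θ, uR b θ * x θ := fun b => by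
    rw [Finset.mul_sum]; exact Finset.sum_congr rfl fun θ _ => by ring
  simp only [BRf, Set.mem_ofPred_eq, h]
  exact forall_congr' fun a' => mul_le_mul_iff_right₀ hc

lemma BRf_eventually {A Θ : Type*} [Fintype A] [Fintype Θ] (uR : A → Θ → ℝ)
    (y : ℝ → Θ → ℝ) (hy : Continuous y) (t0 : ℝ) :
    ∀ᶠ t in 𝓝 t0, BRf uR (y t) ⊆ BRf uR (y t0) := by
  have h : ∀ a : A, ∀ᶠ t in 𝓝 t0, a ∈ BRf uR (y t) → a ∈ BRf uR (y t0) := by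
    intro a
    by_cases ha : a ∈ BRf uR (y t0)
    · exact Eventually.of_forall fun _ _ => ha
    · have : ∃ a', ∑ θ, uR a θ * y t0 θ < ∑ θ, uR a' θ * y t0 θ := by
        simpa [BRf] using ha
      obtain ⟨a', ha'⟩ := this
      have hc : ∀ b, Continuous fun t => ∑ θ, uR b θ * y t θ := fun b => by fun_prop
      filter_upwards [(hc a).continuousAt.eventually_lt (hc a').continuousAt ha'] with t ht h
      exact absurd (h a') (not_le.mpr ht)
  filter_upwards [eventually_all.mpr h] with t ht a ha using ht a ha

/-! ### A potential argument -/

lemma potential_exists {M : Type*} [Fintype M] [Nonempty M] (v w : M → ℝ → ℝ) (C : ℝ)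
    (hC : ∀ m t, |v m t| ≤ C)
    (h : ∀ m t0, ∀ᶠ t in 𝓝 t0, v m t ≤ v m t0 ∧ w m t0 ≤ w m t) (hwv : ∀ m t, w m t ≤ v m t) :
    ∃ x ∈ stdSimplex ℝ M, ∃ s, (∀ m, w m (x m) ≤ s) ∧ (∀ m, 0 < x m → s ≤ v m (x m)) := by
  classical
  have hmeas : ∀ m, Measurable (v m) := fun m => by
    apply UpperSemicontinuous.measurable
    intro t0 y hy
    filter_upwards [h m t0] with t ht using ht.1.trans_lt hy
  have hIntg : ∀ m a b, IntervalIntegrable (v m) volume a b := by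
    intro m a b
    rw [intervalIntegrable_iff]
    exact Measure.integrableOn_of_bounded (M := C) (by simp) (hmeas m).aestronglyMeasurable
      (Eventually.of_forall fun t => hC m t)
  let P : (M → ℝ) → ℝ := fun x => ∑ m, ∫ t in (0:ℝ)..x m, v m t
  have hP : Continuous P := by
    refine continuous_finsetSum _ fun m _ => ?_
    exact (intervalIntegral.continuous_primitive (hIntg m) 0).comp (continuous_apply m)
  have hne : (stdSimplex ℝ M).Nonempty := ⟨_, single_mem_stdSimplex ℝ (Classical.arbitrary M)⟩
  obtain ⟨x, hx, hmax⟩ := (isCompact_stdSimplex ℝ M).exists_isMaxOn hne hP.continuousOn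
  have key : ∀ m m', 0 < x m → w m' (x m') ≤ v m (x m) := by
    intro m m' hm
    by_cases hmm : m = m'
    · subst hmm; exact hwv _ _
    by_contra hlt
    push Not at hlt
    obtain ⟨d1, hd1, h1⟩ := Metric.eventually_nhds_iff.mp (h m (x m))
    obtain ⟨d2, hd2, h2⟩ := Metric.eventually_nhds_iff.mp (h m' (x m'))
    obtain ⟨δ, hδ0, hδ⟩ : ∃ δ, 0 < δ ∧ δ < d1 ∧ δ < d2 ∧ δ < x m := by
      obtain ⟨δ, h0, hh⟩ := exists_between (lt_min hd1 (lt_min hd2 hm))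
      simp only [lt_min_iff] at hh
      exact ⟨δ, h0, hh⟩
    let x' : M → ℝ := Function.update (Function.update x m (x m - δ)) m' (x m' + δ)
    have hxB : x' m' = x m' + δ := by simp [x']
    have hxA : x' m = x m - δ := by simp [x', hmm]
    have hxO : ∀ k, k ≠ m → k ≠ m' → x' k = x k := fun k hk hk' => by simp [x', hk, hk']
    have hsplit : ∀ f : M → ℝ, ∑ k, f k = f m + f m' + ∑ k ∈ (Finset.univ.erase m).erase m', f k := by
      intro f
      rw [← Finset.add_sum_erase _ _ (Finset.mem_univ m),
        ← Finset.add_sum_erase (Finset.univ.erase m) f (a := m') (by simp [Ne.symm hmm])]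
      ring
    have hrest : ∀ g : M → ℝ → ℝ, ∑ k ∈ (Finset.univ.erase m).erase m', g k (x' k) =
        ∑ k ∈ (Finset.univ.erase m).erase m', g k (x k) := by
      intro g
      refine Finset.sum_congr rfl fun k hk => ?_
      simp only [Finset.mem_erase, Finset.mem_univ, and_true] at hk
      rw [hxO k hk.2 hk.1]
    have hx' : x' ∈ stdSimplex ℝ M := by
      refine ⟨fun k => ?_, ?_⟩
      · by_cases hk' : k = m'
        · rw [hk', hxB]; linarith [hx.1 m']
        · by_cases hk : k = m
          · rw [hk, hxA]; linarith [hδ.2.2]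
          · rw [hxO k hk hk']; exact hx.1 k
      · have e1 := hsplit x'
        have e2 := hsplit x
        have e3 := hrest (fun _ t => t)
        have e4 := hx.2
        rw [e1, hxA, hxB, e3]; linarith
    have hle : P x' ≤ P x := hmax hx'
    have e1 := hsplit (fun k => ∫ t in (0:ℝ)..x' k, v k t)
    have e2 := hsplit (fun k => ∫ t in (0:ℝ)..x k, v k t)
    have e3 := hrest (fun k s => ∫ t in (0:ℝ)..s, v k t)
    simp only [P] at hle
    rw [e1, e2, e3, hxA, hxB] at hle
    have i1 := intervalIntegral.integral_interval_sub_left (hIntg m 0 (x m)) (hIntg m 0 (x m - δ))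
    have i2 := intervalIntegral.integral_interval_sub_left (hIntg m' 0 (x m' + δ)) (hIntg m' 0 (x m'))
    have j1 : ∫ t in (x m - δ)..(x m), v m t ≤ δ * v m (x m) := by
      have := intervalIntegral.integral_mono_on (a := x m - δ) (b := x m) (f := v m)
        (g := fun _ => v m (x m)) (by linarith) (hIntg _ _ _) (by simp) (fun t ht => by
          refine (h1 ?_).1
          rw [Real.dist_eq, abs_lt]; constructor <;> linarith [ht.1, ht.2])
      simpa using this
    have j2 : δ * w m' (x m') ≤ ∫ t in (x m')..(x m' + δ), v m' t := by
      have := intervalIntegral.integral_mono_on (a := x m') (b := x m' + δ) (g := v m')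
        (f := fun _ => w m' (x m')) (by linarith) (by simp) (hIntg _ _ _) (fun t ht => by
          refine (h2 ?_).2.trans (hwv _ _)
          rw [Real.dist_eq, abs_lt]; constructor <;> linarith [ht.1, ht.2])
      simpa using this
    have := mul_lt_mul_of_pos_left hlt hδ0
    linarith
  -- choose the threshold
  have hpos : (Finset.univ.filter fun m => 0 < x m).Nonempty := by
    by_contra hcon
    rw [Finset.not_nonempty_iff_eq_empty, Finset.filter_eq_empty_iff] at hcon
    have : ∑ m, x m ≤ 0 := Finset.sum_nonpos fun m hm => not_lt.mp (hcon hm)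
    linarith [hx.2]
  obtain ⟨m0, hm0, hmin⟩ := Finset.exists_min_image _ (fun m => v m (x m)) hpos
  simp only [Finset.mem_filter, Finset.mem_univ, true_and] at hm0 hmin
  exact ⟨x, hx, v m0 (x m0), fun m => key m0 m hm0, fun m hm => hmin m hm⟩

lemma exists_mixed {A Θ : Type*} [Fintype A] [Nonempty A] [Fintype Θ] (uS : A → ℝ)
    (uR : A → Θ → ℝ) (x : Θ → ℝ) (s : ℝ) (h1 : wG uS uR x ≤ s) (h2 : s ≤ vG uS uR x) :
    ∃ α : A → ℝ, IsDist α ∧ (∀ a, α a ≠ 0 → a ∈ BRf uR x) ∧ ∑ a, uS a * α a = s := by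
  classical
  obtain ⟨a, ha, hav⟩ := exists_vG uS uR x
  obtain ⟨b, hb, hbw⟩ := exists_wG uS uR x
  have hs : s ∈ segment ℝ (uS b) (uS a) := by
    rw [segment_eq_Icc (by linarith)]; constructor <;> linarith
  obtain ⟨p, r, hp, hr, hpr, hs⟩ := hs
  simp only [smul_eq_mul] at hs
  refine ⟨fun k => p * (Pi.single b 1 : A → ℝ) k + r * (Pi.single a 1 : A → ℝ) k,
    ⟨fun k => ?_, ?_⟩, ?_, ?_⟩
  · have : ∀ c : A, 0 ≤ (Pi.single c 1 : A → ℝ) k := fun c => by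
      rw [Pi.single_apply]; split_ifs <;> norm_num
    exact add_nonneg (mul_nonneg hp (this b)) (mul_nonneg hr (this a))
  · simp [Finset.sum_add_distrib, ← Finset.mul_sum, hpr]
  · intro k hk
    by_cases hka : k = a
    · exact hka ▸ ha
    · by_cases hkb : k = b
      · exact hkb ▸ hb
      · simp [hka, hkb] at hk
  · rw [← hs]
    simp only [mul_add, Finset.sum_add_distrib, Pi.single_apply]
    simp [mul_comm]

/-! ### Existence of equilibria -/

/-- Continuation equilibrium after a given experiment. -/
def IsCont {A Θ M : Type*} [Fintype A] [Fintype Θ] [Fintype M]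
    (uS : A → ℝ) (uR : A → Θ → ℝ) (μ0 : Θ → ℝ) (χ : ℝ)
    (ψ σ : Θ → M → ℝ) (α : M → A → ℝ) (β : M → Θ → ℝ) : Prop :=
  (∀ θ, IsDist (σ θ)) ∧ (∀ m, IsDist (α m)) ∧ (∀ m, IsDist (β m)) ∧
  (∀ m a, α m a ≠ 0 → a ∈ BRf uR (β m)) ∧
  (∀ m θ, β m θ * (∑ θ', μ0 θ' * (χ * ψ θ' m + (1 - χ) * σ θ' m)) =
      μ0 θ * (χ * ψ θ m + (1 - χ) * σ θ m)) ∧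
  (∀ θ m, σ θ m ≠ 0 → ∀ m' : M, ∑ a, uS a * α m' a ≤ ∑ a, uS a * α m a)

lemma exists_isCont {A Θ M : Type*} [Fintype A] [Fintype Θ] [Fintype M] [Nonempty A] [Nonempty M]
    (uS : A → ℝ) (uR : A → Θ → ℝ) (μ0 : Θ → ℝ) (hμ0 : μ0 ∈ stdSimplex ℝ Θ) (χ : ℝ)
    (hχ0 : 0 ≤ χ) (hχ1 : χ ≤ 1) (ψ : Θ → M → ℝ) (hψ : IsExperiment ψ) :
    ∃ σ α β, IsCont uS uR μ0 χ ψ σ α β := by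
  classical
  obtain ⟨C, hC0, hC⟩ := exists_bound uS
  let Q : M → ℝ := fun m => ∑ θ, μ0 θ * (χ * ψ θ m)
  have hq0 : ∀ m θ, 0 ≤ μ0 θ * (χ * ψ θ m) := fun m θ =>
    mul_nonneg (hμ0.1 θ) (mul_nonneg hχ0 ((hψ θ).1 m))
  let y : M → ℝ → Θ → ℝ := fun m t θ =>
    if Q m = 0 then μ0 θ else μ0 θ * (χ * ψ θ m + (1 - χ) * t)
  have hy : ∀ m, Continuous (y m) := by
    intro m
    refine continuous_pi fun θ => ?_
    by_cases h : Q m = 0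
    · simp only [y, h, if_true]; fun_prop
    · simp only [y, h, if_false]; fun_prop
  have hev : ∀ m t0, ∀ᶠ t in 𝓝 t0, vG uS uR (y m t) ≤ vG uS uR (y m t0) ∧
      wG uS uR (y m t0) ≤ wG uS uR (y m t) := by
    intro m t0
    filter_upwards [BRf_eventually uR (y m) (hy m) t0] with t ht
    obtain ⟨a, ha, hav⟩ := exists_vG uS uR (y m t)
    obtain ⟨b, hb, hbv⟩ := exists_wG uS uR (y m t)
    exact ⟨hav ▸ le_vG uS uR _ (ht ha), hbv ▸ wG_le uS uR _ (ht hb)⟩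
  have hwv : ∀ z, wG uS uR z ≤ vG uS uR z := fun z => by
    obtain ⟨a, ha, hav⟩ := exists_vG uS uR z
    exact hav ▸ wG_le uS uR _ ha
  obtain ⟨x, hx, s, hs1, hs2⟩ := potential_exists (fun m t => vG uS uR (y m t))
    (fun m t => wG uS uR (y m t)) C (fun m t => by
      obtain ⟨a, ha, hav⟩ := exists_vG uS uR (y m t)
      simpa [← hav] using hC a) hev (fun m t => hwv _)
  have hα : ∀ m, ∃ α : A → ℝ, IsDist α ∧ (∀ a, α a ≠ 0 → a ∈ BRf uR (y m (x m))) ∧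
      ∑ a, uS a * α a = if 0 < x m then s else wG uS uR (y m (x m)) := by
    intro m
    by_cases hm : 0 < x m
    · simp only [hm, if_true]; exact exists_mixed uS uR _ s (hs1 m) (hs2 m hm)
    · simp only [hm, if_false]; exact exists_mixed uS uR _ _ le_rfl (hwv _)
  choose α hα1 hα2 hα3 using hα
  have hynn : ∀ m θ, 0 ≤ y m (x m) θ := by
    intro m θ
    simp only [y]
    split_ifs
    · exact hμ0.1 θ
    · exact mul_nonneg (hμ0.1 θ) (add_nonneg (mul_nonneg hχ0 ((hψ θ).1 m))
        (mul_nonneg (by linarith) (hx.1 m)))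
  let Y : M → ℝ := fun m => ∑ θ, y m (x m) θ
  have hYpos : ∀ m, 0 < Y m := by
    intro m
    by_cases h : Q m = 0
    · simp only [Y, y, h, if_true, hμ0.2]; norm_num
    · have h1 : 0 < Q m := lt_of_le_of_ne (Finset.sum_nonneg fun θ _ => hq0 m θ) (Ne.symm h)
      refine h1.trans_le (Finset.sum_le_sum fun θ _ => ?_)
      simp only [y, h, if_false]
      refine mul_le_mul_of_nonneg_left ?_ (hμ0.1 θ)
      have := mul_nonneg (sub_nonneg.mpr hχ1) (hx.1 m)
      linarith
  refine ⟨fun _ => x, α, fun m θ => (Y m)⁻¹ * y m (x m) θ, fun _ => hx, hα1, ?_, ?_, ?_, ?_⟩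
  · intro m
    refine ⟨fun θ => mul_nonneg (inv_nonneg.mpr (hYpos m).le) (hynn m θ), ?_⟩
    rw [← Finset.mul_sum]
    exact inv_mul_cancel₀ (hYpos m).ne'
  · intro m a ha
    rw [BRf_smul uR _ (inv_pos.mpr (hYpos m))]
    exact hα2 m a ha
  · intro m θ
    by_cases h : Q m = 0
    · have hz : ∀ θ, μ0 θ * (χ * ψ θ m) = 0 := fun θ =>
        (Finset.sum_eq_zero_iff_of_nonneg (fun θ _ => hq0 m θ)).mp h θ (Finset.mem_univ θ)
      have hY1 : Y m = 1 := by simp only [Y, y, h, if_true]; exact hμ0.2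
      have hz' : ∀ θ, μ0 θ * (χ * ψ θ m + (1 - χ) * x m) = μ0 θ * ((1 - χ) * x m) := fun θ => by
        rw [mul_add, hz, zero_add]
      simp only [hz', hY1, ← Finset.sum_mul, hμ0.2]
      simp only [y, h, if_true]; ring
    · have hy' : ∀ θ, y m (x m) θ = μ0 θ * (χ * ψ θ m + (1 - χ) * x m) := fun θ => by
        simp only [y, h, if_false]
      have hY' : Y m = ∑ θ', μ0 θ' * (χ * ψ θ' m + (1 - χ) * x m) :=
        Finset.sum_congr rfl fun θ _ => hy' θ
      beta_reduce
      rw [← hY', ← hy']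
      have := (hYpos m).ne'
      field_simp
  · intro θ m hm m'
    have hm' : 0 < x m := lt_of_le_of_ne (hx.1 m) (Ne.symm hm)
    rw [hα3, hα3]
    simp only [hm', if_true]
    split_ifs
    · exact le_rfl
    · exact hs1 m'

/-- Value in a continuation equilibrium. -/
noncomputable def contValue {A Θ M : Type*} [Fintype A] [Fintype Θ] [Fintype M]
    (uS : A → ℝ) (μ0 : Θ → ℝ) (χ : ℝ) (ψ σ : Θ → M → ℝ) (α : M → A → ℝ) : ℝ :=
  ∑ θ, μ0 θ * ∑ m, (χ * ψ θ m + (1 - χ) * σ θ m) * ∑ a, uS a * α m a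

lemma exists_pbe {A Θ M : Type*} [Fintype A] [Fintype Θ] [Fintype M] [Nonempty A] [Nonempty M]
    (uS : A → ℝ) (uR : A → Θ → ℝ) (μ0 : Θ → ℝ) (hμ0 : μ0 ∈ stdSimplex ℝ Θ) (χ : ℝ)
    (hχ0 : 0 ≤ χ) (hχ1 : χ ≤ 1) : (chiPBEPayoffs A M uS uR μ0 χ).Nonempty := by
  classical
  let K0 : Set ((Θ → M → ℝ) × (Θ → M → ℝ) × (M → A → ℝ) × (M → Θ → ℝ)) := (Set.univ.pi fun _ => stdSimplex ℝ M) ×ˢ (Set.univ.pi fun _ => stdSimplex ℝ M) ×ˢ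
    (Set.univ.pi fun _ => stdSimplex ℝ A) ×ˢ (Set.univ.pi fun _ => stdSimplex ℝ Θ)
  have hK0 : IsCompact K0 :=
    (isCompact_univ_pi fun _ => isCompact_stdSimplex ℝ M).prod
      ((isCompact_univ_pi fun _ => isCompact_stdSimplex ℝ M).prod
        ((isCompact_univ_pi fun _ => isCompact_stdSimplex ℝ A).prod
          (isCompact_univ_pi fun _ => isCompact_stdSimplex ℝ Θ)))
  let K1 : Set ((Θ → M → ℝ) × (Θ → M → ℝ) × (M → A → ℝ) × (M → Θ → ℝ)) := {k | ∀ m a a', k.2.2.1 m a * (∑ θ, uR a' θ * k.2.2.2 m θ -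
    ∑ θ, uR a θ * k.2.2.2 m θ) ≤ 0}
  let K2 : Set ((Θ → M → ℝ) × (Θ → M → ℝ) × (M → A → ℝ) × (M → Θ → ℝ)) := {k | ∀ m θ, k.2.2.2 m θ *
    (∑ θ', μ0 θ' * (χ * k.1 θ' m + (1 - χ) * k.2.1 θ' m)) =
      μ0 θ * (χ * k.1 θ m + (1 - χ) * k.2.1 θ m)}
  let K3 : Set ((Θ → M → ℝ) × (Θ → M → ℝ) × (M → A → ℝ) × (M → Θ → ℝ)) := {k | ∀ θ m m', k.2.1 θ m * (∑ a, uS a * k.2.2.1 m' a -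
    ∑ a, uS a * k.2.2.1 m a) ≤ 0}
  have hK1 : IsClosed K1 := by
    simp only [K1, Set.ofPred_forall]
    refine isClosed_iInter fun m => isClosed_iInter fun a => isClosed_iInter fun a' => ?_
    exact isClosed_le (by fun_prop) (by fun_prop)
  have hK2 : IsClosed K2 := by
    simp only [K2, Set.ofPred_forall]
    refine isClosed_iInter fun m => isClosed_iInter fun a => ?_
    exact isClosed_eq (by fun_prop) (by fun_prop)
  have hK3 : IsClosed K3 := by
    simp only [K3, Set.ofPred_forall]
    refine isClosed_iInter fun m => isClosed_iInter fun a => isClosed_iInter fun a' => ?_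
    exact isClosed_le (by fun_prop) (by fun_prop)
  let K : Set ((Θ → M → ℝ) × (Θ → M → ℝ) × (M → A → ℝ) × (M → Θ → ℝ)) := K0 ∩ (K1 ∩ (K2 ∩ K3))
  have hK : IsCompact K := hK0.inter_right (hK1.inter (hK2.inter hK3))
  have hmem : ∀ (ψ σ : Θ → M → ℝ) (α : M → A → ℝ) (β : M → Θ → ℝ),
      (ψ, σ, α, β) ∈ K ↔ IsExperiment ψ ∧ IsCont uS uR μ0 χ ψ σ α β := by
    intro ψ σ α β
    constructor
    · rintro ⟨⟨h1, h2, h3, h4⟩, h5, h6, h7⟩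
      refine ⟨fun θ => h1 θ trivial, fun θ => h2 θ trivial, fun m => h3 m trivial,
        fun m => h4 m trivial, ?_, h6, ?_⟩
      · intro m a ha a'
        have hp : 0 < α m a := lt_of_le_of_ne ((h3 m trivial).1 a) (Ne.symm ha)
        have := nonpos_of_mul_nonpos_right (h5 m a a') hp
        linarith
      · intro θ m hm m'
        have hp : 0 < σ θ m := lt_of_le_of_ne ((h2 θ trivial).1 m) (Ne.symm hm)
        have := nonpos_of_mul_nonpos_right (h7 θ m m') hp
        linarith
    · rintro ⟨h1, h2, h3, h4, h5, h6, h7⟩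
      refine ⟨⟨fun θ _ => h1 θ, fun θ _ => h2 θ, fun m _ => h3 m, fun m _ => h4 m⟩, ?_, h6, ?_⟩
      · intro m a a'
        by_cases ha : α m a = 0
        · simp [ha]
        · exact mul_nonpos_of_nonneg_of_nonpos ((h3 m).1 a) (by have := h5 m a ha a'; simp only; linarith)
      · intro θ m m'
        by_cases ha : σ θ m = 0
        · simp [ha]
        · exact mul_nonpos_of_nonneg_of_nonpos ((h2 θ).1 m) (by have := h7 θ m ha m'; simp only; linarith)
  have hex := fun ψ hψ => exists_isCont (M := M) uS uR μ0 hμ0 χ hχ0 hχ1 ψ hψ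
  have hne : K.Nonempty := by
    let ψ : Θ → M → ℝ := fun _ => Pi.single (Classical.arbitrary M) 1
    have hψ : IsExperiment ψ := fun _ => single_mem_stdSimplex ℝ _
    obtain ⟨σ, α, β, h⟩ := hex ψ hψ
    exact ⟨(ψ, σ, α, β), (hmem _ _ _ _).mpr ⟨hψ, h⟩⟩
  have hcont : Continuous fun k : ((Θ → M → ℝ) × (Θ → M → ℝ) × (M → A → ℝ) × (M → Θ → ℝ)) => contValue uS μ0 χ k.1 k.2.1 k.2.2.1 := by
    unfold contValue; fun_prop
  obtain ⟨⟨ψ, σ, α, β⟩, hk, hmax⟩ := hK.exists_isMaxOn hne hcont.continuousOn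
  have hsel : ∀ ψ' : Θ → M → ℝ, ∃ (σ' : Θ → M → ℝ) (α' : M → A → ℝ) (β' : M → Θ → ℝ),
      (ψ' = ψ → σ' = σ ∧ α' = α) ∧ (IsExperiment ψ' → IsCont uS uR μ0 χ ψ' σ' α' β') := by
    intro ψ'
    by_cases h : ψ' = ψ
    · exact ⟨σ, α, β, fun _ => ⟨rfl, rfl⟩, fun _ => h ▸ ((hmem _ _ _ _).mp hk).2⟩
    · by_cases hψ' : IsExperiment ψ'
      · obtain ⟨σ', α', β', h'⟩ := hex ψ' hψ'
        exact ⟨σ', α', β', fun h'' => absurd h'' h, fun _ => h'⟩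
      · exact ⟨σ, α, β, fun h'' => absurd h'' h, fun h'' => absurd h'' hψ'⟩
  choose σ' α' β' h1 h2 using hsel
  refine ⟨_, ψ, fun θ ψ' => σ' ψ' θ, fun m ψ' => α' ψ' m, fun m ψ' => β' ψ' m,
    ⟨((hmem _ _ _ _).mp hk).1, fun ψ' h => (h2 ψ' h).1, fun ψ' h => (h2 ψ' h).2.1,
      fun ψ' h => (h2 ψ' h).2.2.1, ?_, fun ψ' h => (h2 ψ' h).2.2.2.1,
      fun ψ' h => (h2 ψ' h).2.2.2.2.1, fun ψ' h => (h2 ψ' h).2.2.2.2.2⟩, rfl⟩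
  intro ψ' hψ'
  have := hmax ((hmem ψ' _ _ _).mpr ⟨hψ', h2 ψ' hψ'⟩)
  simp only [Set.mem_ofPred_eq] at this
  have e := h1 ψ rfl
  unfold chiValue
  beta_reduce
  rw [e.1, e.2]
  exact this

/-! ### Genericity -/

/-- Beliefs supported on a set of states. -/
def faceSet {Θ : Type*} [Fintype Θ] (S : Set Θ) : Set (Θ → ℝ) :=
  {μ | μ ∈ stdSimplex ℝ Θ ∧ ∀ θ, θ ∉ S → μ θ = 0}

/-- Utilities for which the action is a weak best response somewhere on the face. -/
def weakSet {A Θ : Type*} [Fintype Θ] (S : Set Θ) (a : A) : Set (A × Θ → ℝ) :=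
  {u | ∃ μ ∈ faceSet S, ∀ a', ∑ θ, u (a', θ) * μ θ ≤ ∑ θ, u (a, θ) * μ θ}

/-- Utilities for which the action is a strict best response somewhere on the face. -/
def strictSet {A Θ : Type*} [Fintype Θ] (S : Set Θ) (a : A) : Set (A × Θ → ℝ) :=
  {u | ∃ μ ∈ faceSet S, ∀ a', a' ≠ a → ∑ θ, u (a', θ) * μ θ < ∑ θ, u (a, θ) * μ θ}

lemma isCompact_faceSet {Θ : Type*} [Fintype Θ] (S : Set Θ) : IsCompact (faceSet S) := by
  have : faceSet S = stdSimplex ℝ Θ ∩ {μ | ∀ θ, θ ∉ S → μ θ = 0} := rfl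
  rw [this]
  refine (isCompact_stdSimplex ℝ Θ).inter_right ?_
  simp only [Set.ofPred_forall]
  refine isClosed_iInter fun θ => isClosed_iInter fun _ => ?_
  exact isClosed_eq (by fun_prop) (by fun_prop)

lemma isClosed_weakSet {A Θ : Type*} [Fintype A] [Fintype Θ] (S : Set Θ) (a : A) :
    IsClosed (weakSet S a) := by
  have : CompactSpace (faceSet S) := isCompact_iff_compactSpace.mp (isCompact_faceSet S)
  have h : weakSet S a = Prod.snd '' {k : faceSet S × (A × Θ → ℝ) |
      ∀ a', ∑ θ, k.2 (a', θ) * k.1.1 θ ≤ ∑ θ, k.2 (a, θ) * k.1.1 θ} := by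
    ext u
    constructor
    · rintro ⟨μ, hμ, h⟩
      exact ⟨(⟨μ, hμ⟩, u), h, rfl⟩
    · rintro ⟨⟨μ, u'⟩, h, rfl⟩
      exact ⟨μ.1, μ.2, h⟩
  rw [h]
  apply isClosedMap_snd_of_compactSpace
  simp only [Set.ofPred_forall]
  refine isClosed_iInter fun a' => ?_
  have hc : ∀ b : A, Continuous fun k : faceSet S × (A × Θ → ℝ) =>
      ∑ θ, k.2 (b, θ) * k.1.1 θ := fun b =>
    continuous_finsetSum _ fun θ _ => ((continuous_apply (b, θ)).comp continuous_snd).mul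
      ((continuous_apply θ).comp (continuous_subtype_val.comp continuous_fst))
  exact isClosed_le (hc a') (hc a)

lemma isOpen_strictSet {A Θ : Type*} [Fintype A] [Fintype Θ] (S : Set Θ) (a : A) :
    IsOpen (strictSet S a) := by
  have h : strictSet S a = ⋃ μ ∈ faceSet S, {u : A × Θ → ℝ |
      ∀ a', a' ≠ a → ∑ θ, u (a', θ) * μ θ < ∑ θ, u (a, θ) * μ θ} := by
    ext u
    simp [strictSet]
  rw [h]
  refine isOpen_biUnion fun μ _ => ?_
  simp only [Set.ofPred_forall]
  refine isOpen_iInter_of_finite fun a' => isOpen_iInter_of_finite fun _ => ?_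
  exact isOpen_lt (by fun_prop) (by fun_prop)

/-- The direction increasing the utility of one action in all states. -/
noncomputable def actDir {A : Type*} (Θ : Type*) (a : A) : A × Θ → ℝ :=
  open Classical in fun k => if k.1 = a then 1 else 0

lemma weak_to_strict {A Θ : Type*} [Fintype Θ] (S : Set Θ) (a : A) (u : A × Θ → ℝ)
    (hu : u ∈ weakSet S a) (t : ℝ) (ht : 0 < t) : u + t • actDir Θ a ∈ strictSet S a := by
  obtain ⟨μ, hμ, h⟩ := hu
  refine ⟨μ, hμ, fun a' ha' => ?_⟩
  have e1 : ∑ θ, (u + t • actDir Θ a) (a', θ) * μ θ = ∑ θ, u (a', θ) * μ θ :=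
    Finset.sum_congr rfl fun θ _ => by simp [actDir, ha']
  have e2 : ∑ θ, (u + t • actDir Θ a) (a, θ) * μ θ = ∑ θ, u (a, θ) * μ θ + t := by
    have : ∀ θ, (u + t • actDir Θ a) (a, θ) * μ θ = u (a, θ) * μ θ + t * μ θ := fun θ => by
      simp [actDir]; ring
    simp only [this, Finset.sum_add_distrib, ← Finset.mul_sum, hμ.1.2, mul_one]
  rw [e1, e2]
  linarith [h a']

lemma isClosed_bad {A Θ : Type*} [Fintype A] [Fintype Θ] (S : Set Θ) (a : A) :
    IsClosed (weakSet S a \ strictSet S a) :=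
  (isClosed_weakSet S a).sdiff (isOpen_strictSet S a)

lemma null_bad {A Θ : Type*} [Fintype A] [Fintype Θ] (S : Set Θ) (a : A) :
    volume (weakSet S a \ strictSet S a) = 0 := by
  refine Measure.addHaar_eq_zero_of_disjoint_translates volume
    (fun n : ℕ => ((1 : ℝ) / (n + 1)) • actDir Θ a) ?_ ?_ (isClosed_bad S a).measurableSet
  · have : Tendsto (fun n : ℕ => ((1 : ℝ) / (n + 1)) • actDir Θ a) atTop
        (𝓝 ((0 : ℝ) • actDir Θ a)) :=
      tendsto_one_div_add_atTop_nhds_zero_nat.smul_const _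
    exact Metric.isBounded_range_of_tendsto _ this
  · have key : ∀ s t : ℝ, s < t → ∀ x y, x ∈ weakSet S a → y ∉ strictSet S a →
        s • actDir Θ a + y ≠ t • actDir Θ a + x := by
      intro s t hst x y hx hy h
      apply hy
      have := weak_to_strict S a x hx (t - s) (sub_pos.mpr hst)
      convert this using 1
      rw [sub_smul]
      linear_combination h
    intro i j hij
    rw [Function.onFun, Set.disjoint_left]
    rintro z hz1 hz2
    rw [Set.singleton_add] at hz1 hz2
    obtain ⟨x, hx, hxz⟩ := hz1
    obtain ⟨y, hy, hyz⟩ := hz2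
    have hne : (1 : ℝ) / (i + 1) ≠ 1 / (j + 1) := by
      intro h
      rw [div_eq_div_iff (by positivity) (by positivity)] at h
      exact hij (by exact_mod_cast (by linarith : (i : ℝ) = j))
    rcases lt_or_gt_of_ne hne with h | h
    · exact key _ _ h y x hy.1 hx.2 (hxz.trans hyz.symm)
    · exact key _ _ h x y hx.1 hy.2 (hyz.trans hxz.symm)

/-- The bad set of receiver utilities. -/
def badSet (A Θ : Type*) [Fintype Θ] : Set (A × Θ → ℝ) :=
  ⋃ k : Set Θ × A, weakSet k.1 k.2 \ strictSet k.1 k.2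

lemma badSet_closed (A Θ : Type*) [Fintype A] [Fintype Θ] : IsClosed (badSet A Θ) :=
  isClosed_iUnion_of_finite fun k => isClosed_bad k.1 k.2

lemma badSet_null (A Θ : Type*) [Fintype A] [Fintype Θ] : volume (badSet A Θ) = 0 :=
  measure_iUnion_null fun k => null_bad k.1 k.2

lemma badSet_nowhereDense (A Θ : Type*) [Fintype A] [Fintype Θ] :
    IsNowhereDense (badSet A Θ) :=
  (badSet_closed A Θ).isNowhereDense_iff.mpr
    (Measure.interior_eq_empty_of_null (badSet_null A Θ))

/-! ### Caratheodory-type reduction -/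

lemma reduce_support {A Θ : Type*} [Fintype A] [Fintype Θ] (x : A → Θ → ℝ)
    (hx : ∀ a θ, 0 ≤ x a θ) (N : A → ℝ) (hN : ∀ a, (∀ θ, x a θ = 0) → N a = 0) (n : ℕ) :
    ∀ c : A → ℝ, (∀ a, 0 ≤ c a) → (Finset.univ.filter fun a => c a ≠ 0).card ≤ n →
    ∃ c' : A → ℝ, (∀ a, 0 ≤ c' a) ∧
      (∀ θ, ∑ a, c' a * x a θ = ∑ a, c a * x a θ) ∧ ∑ a, c a * N a ≤ ∑ a, c' a * N a ∧
      (Finset.univ.filter fun a => c' a ≠ 0).card ≤ Fintype.card Θ := by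
  classical
  induction n with
  | zero => exact fun c hc h => ⟨c, hc, fun _ => rfl, le_rfl, h.trans (Nat.zero_le _)⟩
  | succ n ih =>
    intro c hc h
    by_cases hcard : (Finset.univ.filter fun a => c a ≠ 0).card ≤ Fintype.card Θ
    · exact ⟨c, hc, fun _ => rfl, le_rfl, hcard⟩
    -- a direction
    have hdir : ∃ d : A → ℝ, (∀ a, c a = 0 → d a = 0) ∧ (∀ θ, ∑ a, d a * x a θ = 0) ∧
        0 ≤ ∑ a, d a * N a ∧ ∃ a, d a < 0 := by
      by_cases hz : ∃ a, c a ≠ 0 ∧ ∀ θ, x a θ = 0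
      · obtain ⟨a, ha, hxa⟩ := hz
        refine ⟨Pi.single a (-1), fun b hb => ?_, fun θ => ?_, ?_, a, by simp⟩
        · rw [Pi.single_apply, if_neg]; rintro rfl; exact ha hb
        · simp [Pi.single_apply, hxa]
        · simp [Pi.single_apply, hN a hxa]
      push Not at hz
      have hli : ¬ LinearIndependent ℝ (fun a : {a // c a ≠ 0} => x a.1) := by
        intro hli
        have := hli.fintype_card_le_finrank
        rw [Module.finrank_fintype_fun_eq_card, Fintype.card_subtype] at this
        exact hcard this
      obtain ⟨g, hg, ⟨i, hi⟩, hgi⟩ := Fintype.not_linearIndependent_iff.mp hli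
      let d : A → ℝ := fun a => if ha : c a ≠ 0 then g ⟨a, ha⟩ else 0
      have hd0 : ∀ a, c a = 0 → d a = 0 := fun a ha => by simp [d, ha]
      have hdx : ∀ θ, ∑ a, d a * x a θ = 0 := by
        intro θ
        have h1 := congrFun hg θ
        simp only [Finset.sum_apply, Pi.smul_apply, smul_eq_mul, Pi.zero_apply] at h1
        rw [← h1, ← Finset.sum_filter_add_sum_filter_not Finset.univ (fun a => c a ≠ 0),
          Finset.sum_eq_zero (s := Finset.univ.filter fun a => ¬ c a ≠ 0), add_zero,
          Finset.sum_subtype _ (p := fun a => c a ≠ 0) (by simp)]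
        · exact Finset.sum_congr rfl fun a _ => by simp [d, a.2]
        · intro a ha
          simp only [Finset.mem_filter, Finset.mem_univ, true_and, not_not] at ha
          simp [hd0 a ha]
      have hdi : d i ≠ 0 := by simp [d, hi, hgi]
      have hneg : ∀ e : A → ℝ, (∀ a, c a = 0 → e a = 0) → (∀ θ, ∑ a, e a * x a θ = 0) → e i ≠ 0 →
          ∃ a, e a < 0 := by
        intro e _ he hei
        by_contra hcon
        push Not at hcon
        obtain ⟨θ, hθ⟩ := hz i hi
        have h1 := (Finset.sum_eq_zero_iff_of_nonneg
          (fun a _ => mul_nonneg (hcon a) (hx a θ))).mp (he θ) i (Finset.mem_univ i)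
        rcases mul_eq_zero.mp h1 with h2 | h2
        · exact hei h2
        · exact hθ h2
      by_cases hs : 0 ≤ ∑ a, d a * N a
      · exact ⟨d, hd0, hdx, hs, hneg d hd0 hdx hdi⟩
      · have e1 : ∀ f : A → ℝ, ∑ a, (-d a) * f a = -∑ a, d a * f a := fun f => by
          rw [← Finset.sum_neg_distrib]; exact Finset.sum_congr rfl fun a _ => by ring
        refine ⟨fun a => - d a, fun a ha => by simp [hd0 a ha], fun θ => ?_, ?_,
          hneg _ (fun a ha => by simp [hd0 a ha]) (fun θ => ?_) (by simpa using hdi)⟩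
        · rw [e1 (fun a => x a θ), hdx, neg_zero]
        · rw [e1]; linarith
        · rw [e1 (fun a => x a θ), hdx, neg_zero]
    obtain ⟨d, hd0, hdx, hdN, a1, ha1⟩ := hdir
    obtain ⟨a0, ha0, hmin⟩ := Finset.exists_min_image (Finset.univ.filter fun a => d a < 0)
      (fun a => c a / (- d a)) ⟨a1, by simpa using ha1⟩
    simp only [Finset.mem_filter, Finset.mem_univ, true_and] at ha0 hmin
    let t := c a0 / (- d a0)
    have ht : 0 ≤ t := div_nonneg (hc a0) (by linarith)
    let c1 : A → ℝ := fun a => c a + t * d a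
    have hc1 : ∀ a, 0 ≤ c1 a := by
      intro a
      by_cases hda : d a < 0
      · have := hmin a hda
        rw [le_div_iff₀ (by linarith)] at this
        simp only [c1, t]; linarith
      · exact add_nonneg (hc a) (mul_nonneg ht (not_lt.mp hda))
    have hsum : ∀ f : A → ℝ, ∑ a, c1 a * f a = ∑ a, c a * f a + t * ∑ a, d a * f a := by
      intro f
      rw [Finset.mul_sum, ← Finset.sum_add_distrib]
      exact Finset.sum_congr rfl fun a _ => by simp only [c1]; ring
    have hlt : (Finset.univ.filter fun a => c1 a ≠ 0).card <
        (Finset.univ.filter fun a => c a ≠ 0).card := by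
      apply Finset.card_lt_card
      rw [Finset.ssubset_iff_of_subset]
      · refine ⟨a0, ?_, ?_⟩
        · simp only [Finset.mem_filter, Finset.mem_univ, true_and]
          exact fun h => ha0.ne (hd0 a0 h)
        · simp only [Finset.mem_filter, Finset.mem_univ, true_and, not_not, c1, t]
          have : d a0 ≠ 0 := ha0.ne
          field_simp
          ring
      · intro a
        simp only [Finset.mem_filter, Finset.mem_univ, true_and]
        intro h1 h2
        exact h1 (by simp [c1, h2, hd0 a h2])
    obtain ⟨c', g1, g2, g3, g4⟩ := ih c1 hc1 (by omega)
    refine ⟨c', g1, fun θ => ?_, ?_, g4⟩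
    · rw [g2 θ, hsum (fun a => x a θ), hdx]; ring
    · rw [hsum N] at g3
      have := mul_nonneg ht hdN
      linarith

/-! ### The persuasion value -/

lemma abs_vG_le {A Θ : Type*} [Fintype A] [Nonempty A] [Fintype Θ] (uS : A → ℝ)
    (uR : A → Θ → ℝ) (C : ℝ) (hC : ∀ a, |uS a| ≤ C) (x : Θ → ℝ) : |vG uS uR x| ≤ C := by
  obtain ⟨a, _, ha⟩ := exists_vG uS uR x
  rw [← ha]; exact hC a

lemma bdd_vHat {A Θ : Type*} [Fintype A] [Nonempty A] [Fintype Θ] (uS : A → ℝ)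
    (uR : A → Θ → ℝ) (μ0 : Θ → ℝ) :
    BddAbove ((fun p : ProbabilityMeasure (Belief Θ) =>
    ∫ μ, vG uS uR (μ : Belief Θ).1 ∂(p : Measure (Belief Θ))) '' IPolF μ0) := by
  obtain ⟨C, hC0, hC⟩ := exists_bound uS
  refine ⟨C, ?_⟩
  rintro _ ⟨p, _, rfl⟩
  have := norm_integral_le_of_norm_le_const (μ := (p : Measure (Belief Θ)))
    (f := fun μ => vG uS uR (μ : Belief Θ).1) (C := C)
    (Eventually.of_forall fun μ => abs_vG_le uS uR C hC _)
  simp only [probReal_univ, mul_one] at this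
  exact (le_abs_self _).trans this

lemma finite_le_vHat {A Θ M : Type*} [Fintype A] [Nonempty A] [Fintype Θ] [Fintype M] (uS : A → ℝ)
    (uR : A → Θ → ℝ) (μ0 : Θ → ℝ) (P : M → ℝ) (hP : IsDist P) (β : M → Θ → ℝ)
    (hβ : ∀ m, IsDist (β m)) (hbar : ∀ θ, ∑ m, P m * β m θ = μ0 θ) :
    ∑ m, P m * vG uS uR (β m) ≤ vHatG uS uR μ0 := by
  let b : M → Belief Θ := fun m => ⟨β m, hβ m⟩
  let p : Measure (Belief Θ) := ∑ m, ENNReal.ofReal (P m) • Measure.dirac (b m)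
  have hp : IsProbabilityMeasure p := by
    constructor
    simp only [p, Measure.coe_finsetSum, Finset.sum_apply, Measure.smul_apply, smul_eq_mul,
      measure_univ, mul_one]
    rw [← ENNReal.ofReal_sum_of_nonneg (fun m _ => hP.1 m), hP.2, ENNReal.ofReal_one]
  have hIntg : ∀ f : Belief Θ → ℝ, ∫ μ, f μ ∂p = ∑ m, P m * f (b m) := by
    intro f
    simp only [p]
    rw [integral_finsetSum_measure]
    · refine Finset.sum_congr rfl fun m _ => ?_
      rw [integral_smul_measure, integral_dirac, ENNReal.toReal_ofReal (hP.1 m), smul_eq_mul]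
    · intro m _
      exact (integrable_dirac (by simp)).smul_measure ENNReal.ofReal_ne_top
  refine le_csSup (bdd_vHat uS uR μ0) ⟨⟨p, hp⟩, ?_, ?_⟩
  · intro θ
    exact (hIntg fun μ => μ.1 θ).trans (hbar θ)
  · exact hIntg fun μ => vG uS uR μ.1

lemma pbe_le_vHat {A Θ M : Type*} [Fintype A] [Nonempty A] [Fintype Θ] [Fintype M] (uS : A → ℝ)
    (uR : A → Θ → ℝ) (μ0 : Θ → ℝ) (hμ0 : μ0 ∈ stdSimplex ℝ Θ) (χ : ℝ)
    (hχ0 : 0 ≤ χ) (hχ1 : χ ≤ 1) (s : ℝ) (hs : s ∈ chiPBEPayoffs A M uS uR μ0 χ) :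
    s ≤ vHatG uS uR μ0 := by
  obtain ⟨ψ, σ, α, β, ⟨h0, h1, h2, h3, _, h5, h6, _⟩, rfl⟩ := hs
  let P : M → ℝ := fun m => ∑ θ, μ0 θ * (χ * ψ θ m + (1 - χ) * σ θ ψ m)
  have hsum1 : ∀ θ, ∑ m, (χ * ψ θ m + (1 - χ) * σ θ ψ m) = 1 := fun θ => by
    rw [Finset.sum_add_distrib, ← Finset.mul_sum, ← Finset.mul_sum, (h0 θ).2, (h1 ψ h0 θ).2]; ring
  have hP : IsDist P := by
    refine ⟨fun m => Finset.sum_nonneg fun θ _ => mul_nonneg (hμ0.1 θ)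
      (add_nonneg (mul_nonneg hχ0 ((h0 θ).1 m)) (mul_nonneg (by linarith) ((h1 ψ h0 θ).1 m))), ?_⟩
    simp only [P]
    rw [Finset.sum_comm]
    simp only [← Finset.mul_sum, hsum1, mul_one]
    exact hμ0.2
  have hb := finite_le_vHat uS uR μ0 P hP (fun m => β m ψ) (h3 ψ h0) (fun θ => by
    have : ∀ m, P m * β m ψ θ = μ0 θ * (χ * ψ θ m + (1 - χ) * σ θ ψ m) := fun m => by
      rw [← h6 ψ h0 m θ, mul_comm]
    simp only [this, ← Finset.mul_sum, hsum1, mul_one])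
  refine le_trans ?_ hb
  have e : chiValue uS μ0 χ σ α ψ = ∑ m, P m * ∑ a, uS a * α m ψ a := by
    unfold chiValue
    simp only [P, Finset.sum_mul]
    rw [Finset.sum_comm]
    refine Finset.sum_congr rfl fun θ _ => ?_
    rw [Finset.mul_sum]
    exact Finset.sum_congr rfl fun m _ => by rw [mul_assoc]
  rw [e]
  refine Finset.sum_le_sum fun m _ => mul_le_mul_of_nonneg_left ?_ (hP.1 m)
  calc ∑ a, uS a * α m ψ a ≤ ∑ a, vG uS uR (β m ψ) * α m ψ a := by
        refine Finset.sum_le_sum fun a _ => ?_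
        by_cases ha : α m ψ a = 0
        · simp [ha]
        · exact mul_le_mul_of_nonneg_right (le_vG uS uR _ (h5 ψ h0 m a ha)) ((h2 ψ h0 m).1 a)
    _ = vG uS uR (β m ψ) := by rw [← Finset.mul_sum, (h2 ψ h0 m).2, mul_one]

lemma decompose {A Θ : Type*} [Fintype A] [Nonempty A] [Fintype Θ] (uS : A → ℝ)
    (uR : A → Θ → ℝ) (μ0 : Θ → ℝ) (p : ProbabilityMeasure (Belief Θ)) (hp : p ∈ IPolF μ0) :
    ∃ x : A → Θ → ℝ, (∀ a θ, 0 ≤ x a θ) ∧ (∀ θ, ∑ a, x a θ = μ0 θ) ∧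
      (∀ a, a ∈ BRf uR (x a)) ∧
      ∫ μ, vG uS uR (μ : Belief Θ).1 ∂(p : Measure (Belief Θ)) = ∑ a, uS a * ∑ θ, x a θ := by
  classical
  have hcoord : ∀ θ, Measurable fun μ : Belief Θ => μ.1 θ := fun θ =>
    (measurable_pi_apply θ).comp measurable_subtype_coe
  have hBR : ∀ a, MeasurableSet {μ : Belief Θ | a ∈ BRf uR μ.1} := by
    intro a
    have : {μ : Belief Θ | a ∈ BRf uR μ.1} =
        ⋂ a', {μ : Belief Θ | ∑ θ, uR a' θ * μ.1 θ ≤ ∑ θ, uR a θ * μ.1 θ} := by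
      ext μ; simp [BRf]
    rw [this]
    refine MeasurableSet.iInter fun a' => measurableSet_le ?_ ?_
    · exact Finset.measurable_fun_sum _ fun θ _ => (hcoord θ).const_mul _
    · exact Finset.measurable_fun_sum _ fun θ _ => (hcoord θ).const_mul _
  let T : A → Set (Belief Θ) := fun a => {μ | a ∈ BRf uR μ.1 ∧ uS a = vG uS uR μ.1}
  have hT : ∀ a, MeasurableSet (T a) := by
    intro a
    have : T a = {μ : Belief Θ | a ∈ BRf uR μ.1} ∩
        ⋂ a', ⋂ (_ : uS a < uS a'), {μ : Belief Θ | a' ∈ BRf uR μ.1}ᶜ := by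
      ext μ
      simp only [T, Set.mem_inter_iff, Set.mem_iInter, Set.mem_compl_iff, Set.mem_ofPred_eq]
      refine and_congr_right fun ha => ⟨fun h a' hlt ha' => ?_, fun h => ?_⟩
      · have := le_vG uS uR _ ha'
        linarith
      · obtain ⟨b, hb, hbv⟩ := exists_vG uS uR μ.1
        refine le_antisymm (le_vG uS uR _ ha) ?_
        rw [← hbv]
        by_contra hcon
        exact h b (not_le.mp hcon) hb
    rw [this]
    exact (hBR a).inter (MeasurableSet.iInter fun a' => MeasurableSet.iInter fun _ => (hBR a').compl)
  let I : A → Belief Θ → ℝ := fun a => (T a).indicator fun _ => 1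
  have hI : ∀ a, Measurable (I a) := fun a => measurable_const.indicator (hT a)
  have hI0 : ∀ a μ, 0 ≤ I a μ := fun a μ => Set.indicator_nonneg (fun _ _ => zero_le_one) μ
  let n : Belief Θ → ℝ := fun μ => ∑ a, I a μ
  have hn : Measurable n := Finset.measurable_fun_sum _ fun a _ => hI a
  have hn0 : ∀ μ, 0 < n μ := by
    intro μ
    obtain ⟨b, hb, hbv⟩ := exists_vG uS uR μ.1
    have h1 : I b μ = 1 := Set.indicator_of_mem (show μ ∈ T b from ⟨hb, hbv⟩) _
    have : I b μ ≤ n μ := Finset.single_le_sum (f := fun a => I a μ) (fun a _ => hI0 a μ)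
      (Finset.mem_univ b)
    linarith
  let w : A → Belief Θ → ℝ := fun a μ => I a μ / n μ
  have hw : ∀ a, Measurable (w a) := fun a => (hI a).div hn
  have hw0 : ∀ a μ, 0 ≤ w a μ := fun a μ => div_nonneg (hI0 a μ) (hn0 μ).le
  have hwsum : ∀ μ, ∑ a, w a μ = 1 := fun μ => by
    simp only [w, ← Finset.sum_div]; exact div_self (hn0 μ).ne'
  have hw1 : ∀ a μ, w a μ ≤ 1 := fun a μ => by
    rw [← hwsum μ]
    exact Finset.single_le_sum (f := fun a => w a μ) (fun a _ => hw0 a μ) (Finset.mem_univ a)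
  have hwT : ∀ a μ, w a μ ≠ 0 → μ ∈ T a := by
    intro a μ h
    by_contra hcon
    exact h (by simp [w, I, hcon])
  have hμ1 : ∀ (μ : Belief Θ) θ, μ.1 θ ≤ 1 := fun μ θ => by
    rw [← μ.2.2]
    exact Finset.single_le_sum (f := μ.1) (fun a _ => μ.2.1 a) (Finset.mem_univ θ)
  have hIntg : ∀ a θ, Integrable (fun μ : Belief Θ => w a μ * μ.1 θ) (p : Measure (Belief Θ)) := by
    intro a θ
    refine Integrable.of_bound ((hw a).mul (hcoord θ)).aestronglyMeasurable 1
      (Eventually.of_forall fun μ => ?_)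
    rw [Real.norm_eq_abs, abs_of_nonneg (mul_nonneg (hw0 a μ) (μ.2.1 θ))]
    exact mul_le_one₀ (hw1 a μ) (μ.2.1 θ) (hμ1 μ θ)
  refine ⟨fun a θ => ∫ μ : Belief Θ, w a μ * μ.1 θ ∂(p : Measure (Belief Θ)), ?_, ?_, ?_, ?_⟩
  · exact fun a θ => integral_nonneg fun μ => mul_nonneg (hw0 a μ) (μ.2.1 θ)
  · intro θ
    rw [← integral_finsetSum _ fun a _ => hIntg a θ, ← hp θ]
    congr 1
    ext μ
    rw [← Finset.sum_mul, hwsum, one_mul]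
  · intro a a'
    have e : ∀ b, ∑ θ, uR b θ * ∫ μ : Belief Θ, w a μ * μ.1 θ ∂(p : Measure (Belief Θ)) =
        ∫ μ : Belief Θ, ∑ θ, uR b θ * (w a μ * μ.1 θ) ∂(p : Measure (Belief Θ)) := by
      intro b
      rw [integral_finsetSum _ fun θ _ => (hIntg a θ).const_mul _]
      simp only [integral_const_mul]
    rw [e, e]
    refine integral_mono (integrable_finsetSum _ fun θ _ => (hIntg a θ).const_mul _)
      (integrable_finsetSum _ fun θ _ => (hIntg a θ).const_mul _) fun μ => ?_
    have e2 : ∀ b, ∑ θ, uR b θ * (w a μ * μ.1 θ) = w a μ * ∑ θ, uR b θ * μ.1 θ := fun b => by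
      rw [Finset.mul_sum]; exact Finset.sum_congr rfl fun θ _ => by ring
    beta_reduce
    rw [e2, e2]
    by_cases h : w a μ = 0
    · simp [h]
    · exact mul_le_mul_of_nonneg_left ((hwT a μ h).1 a') (hw0 a μ)
  · have e : ∀ a, uS a * ∑ θ, ∫ μ : Belief Θ, w a μ * μ.1 θ ∂(p : Measure (Belief Θ)) =
        ∫ μ : Belief Θ, uS a * ∑ θ, (w a μ * μ.1 θ) ∂(p : Measure (Belief Θ)) := by
      intro a
      rw [integral_const_mul, integral_finsetSum _ fun θ _ => hIntg a θ]
    simp only [e]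
    rw [← integral_finsetSum _ fun a _ =>
      (integrable_finsetSum _ fun θ _ => hIntg a θ).const_mul _]
    congr 1
    ext μ
    calc vG uS uR μ.1 = ∑ a, w a μ * vG uS uR μ.1 := by rw [← Finset.sum_mul, hwsum, one_mul]
      _ = ∑ a, uS a * ∑ θ, w a μ * μ.1 θ := by
        refine Finset.sum_congr rfl fun a _ => ?_
        rw [← Finset.mul_sum, μ.2.2, mul_one]
        by_cases h : w a μ = 0
        · simp [h]
        · rw [(hwT a μ h).2, mul_comm]

/-! ### Robust experiments -/

lemma good_joint {A Θ M : Type*} [Fintype A] [Nonempty A] [Fintype Θ] [Nonempty Θ] [Fintype M]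
    (hM : 2 * Fintype.card Θ ≤ Fintype.card M) (uS : A → ℝ) (u : A × Θ → ℝ)
    (hu : u ∉ badSet A Θ) (μ0 : Θ → ℝ) (hμ0 : μ0 ∈ stdSimplex ℝ Θ)
    (C : ℝ) (hC0 : 0 ≤ C) (hC : ∀ a, |uS a| ≤ C)
    (x : A → Θ → ℝ) (hx : ∀ a θ, 0 ≤ x a θ) (hxsum : ∀ θ, ∑ a, x a θ = μ0 θ)
    (hxBR : ∀ a, a ∈ BRf (fun a θ => u (a, θ)) (x a)) (ε : ℝ) (hε : 0 < ε) :
    ∃ (q : M → Θ → ℝ) (g : M → ℝ), (∀ m θ, 0 ≤ q m θ) ∧ (∀ θ, ∑ m, q m θ = μ0 θ) ∧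
      (∀ m, g m = -C ∨ ∃ a, g m = uS a ∧
        ∀ a', a' ≠ a → ∑ θ, u (a', θ) * q m θ < ∑ θ, u (a, θ) * q m θ) ∧
      (∑ a, uS a * ∑ θ, x a θ) - ε ≤ ∑ m, g m * ∑ θ, q m θ := by
  classical
  obtain ⟨c, hc0, hcx, hcN, hccard⟩ := reduce_support x hx (fun a => uS a * ∑ θ, x a θ)
    (fun a ha => by simp [ha]) (Fintype.card A) (fun _ => 1) (fun _ => zero_le_one)
    (Finset.card_le_univ _)
  simp only [one_mul, hxsum] at hcx hcN
  have hcx0 : ∀ a θ, 0 ≤ c a * x a θ := fun a θ => mul_nonneg (hc0 a) (hx a θ)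
  let S : Finset A := Finset.univ.filter fun a => c a ≠ 0 ∧ ∃ θ, x a θ ≠ 0
  have hScard : S.card ≤ Fintype.card Θ := by
    refine le_trans (Finset.card_le_card ?_) hccard
    intro a ha
    simp only [S, Finset.mem_filter, Finset.mem_univ, true_and] at ha ⊢
    exact ha.1
  have hnS : ∀ a, a ∉ S → ∀ θ, c a * x a θ = 0 := by
    intro a ha θ
    simp only [S, Finset.mem_filter, Finset.mem_univ, true_and, not_and, not_exists, not_not] at ha
    by_cases h : c a = 0
    · simp [h]
    · simp [ha h θ]
  -- strict beliefs
  have hstr : ∀ a, ∃ μ ∈ faceSet {θ | μ0 θ ≠ 0}, a ∈ S →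
      ∀ a', a' ≠ a → ∑ θ, u (a', θ) * μ θ < ∑ θ, u (a, θ) * μ θ := by
    intro a
    by_cases ha : a ∈ S
    · have ha' := ha
      simp only [S, Finset.mem_filter, Finset.mem_univ, true_and] at ha'
      obtain ⟨_, θ0, hθ0⟩ := ha'
      have hpos : 0 < ∑ θ, x a θ := by
        refine lt_of_lt_of_le (lt_of_le_of_ne (hx a θ0) (Ne.symm hθ0)) ?_
        exact Finset.single_le_sum (f := x a) (fun θ _ => hx a θ) (Finset.mem_univ θ0)
      have hw : u ∈ weakSet {θ | μ0 θ ≠ 0} a := by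
        refine ⟨fun θ => (∑ θ, x a θ)⁻¹ * x a θ, ⟨⟨fun θ => mul_nonneg (inv_nonneg.mpr hpos.le)
          (hx a θ), ?_⟩, ?_⟩, ?_⟩
        · rw [← Finset.mul_sum]; exact inv_mul_cancel₀ hpos.ne'
        · intro θ hθ
          simp only [Set.mem_ofPred_eq, not_not] at hθ
          have : x a θ = 0 := (Finset.sum_eq_zero_iff_of_nonneg (fun a _ => hx a θ)).mp
            ((hxsum θ).trans hθ) a (Finset.mem_univ a)
          simp [this]
        · have := hxBR a
          rw [← BRf_smul _ _ (inv_pos.mpr hpos)] at this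
          exact this
      have hs : u ∈ strictSet {θ | μ0 θ ≠ 0} a := by
        by_contra hcon
        exact hu (Set.mem_iUnion.mpr ⟨({θ | μ0 θ ≠ 0}, a), hw, hcon⟩)
      obtain ⟨μ, h1, h2⟩ := hs
      exact ⟨μ, h1, fun _ => h2⟩
    · exact ⟨μ0, ⟨hμ0, fun θ hθ => by simpa using hθ⟩, fun h => absurd h ha⟩
  choose μ' hμ' hμs using hstr
  have hsum1 : ∀ a, ∑ θ, μ' a θ = 1 := fun a => (hμ' a).1.2
  have hμ'1 : ∀ a θ, μ' a θ ≤ 1 := fun a θ => by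
    rw [← hsum1 a]
    exact Finset.single_le_sum (f := μ' a) (fun θ _ => (hμ' a).1.1 θ) (Finset.mem_univ θ)
  obtain ⟨b, hb0, hb⟩ : ∃ b : ℝ, 0 < b ∧ ∀ θ, μ0 θ ≠ 0 → b ≤ μ0 θ := by
    obtain ⟨θ0, h⟩ := Finite.exists_min fun θ => if μ0 θ = 0 then (1 : ℝ) else μ0 θ
    refine ⟨if μ0 θ0 = 0 then (1 : ℝ) else μ0 θ0, ?_, fun θ hθ => ?_⟩
    · split_ifs with h0
      · norm_num
      · exact lt_of_le_of_ne (hμ0.1 θ0) (Ne.symm h0)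
    · have := h θ
      simpa [hθ] using this
  obtain ⟨η, hη0, hη1, hηC⟩ : ∃ η : ℝ, 0 < η ∧ η ≤ 1 ∧ 2 * C * η ≤ ε := by
    refine ⟨min 1 (ε / (2 * C + 1)), lt_min one_pos (by positivity), min_le_left _ _, ?_⟩
    have h1 : min 1 (ε / (2 * C + 1)) ≤ ε / (2 * C + 1) := min_le_right _ _
    rw [le_div_iff₀ (by positivity)] at h1
    have h2 : 0 < min 1 (ε / (2 * C + 1)) := lt_min one_pos (by positivity)
    nlinarith
  have hcA : (0 : ℝ) < Fintype.card A := by exact_mod_cast Fintype.card_pos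
  let κ : ℝ := η * b / Fintype.card A
  have hκ0 : 0 < κ := by positivity
  let r : Θ → ℝ := fun θ => η * μ0 θ - κ * ∑ a ∈ S, μ' a θ
  have hr : ∀ θ, 0 ≤ r θ := by
    intro θ
    simp only [r, sub_nonneg]
    by_cases h : μ0 θ = 0
    · have : ∑ a ∈ S, μ' a θ = 0 := Finset.sum_eq_zero fun a _ => (hμ' a).2 θ (by simpa using h)
      simp [h, this]
    · have h1 : ∑ a ∈ S, μ' a θ ≤ Fintype.card A := by
        calc ∑ a ∈ S, μ' a θ ≤ ∑ a ∈ S, (1 : ℝ) := Finset.sum_le_sum fun a _ => hμ'1 a θ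
          _ = S.card := by simp
          _ ≤ Fintype.card A := by exact_mod_cast Finset.card_le_univ S
      calc κ * ∑ a ∈ S, μ' a θ ≤ κ * Fintype.card A := mul_le_mul_of_nonneg_left h1 hκ0.le
        _ = η * b := by simp only [κ]; field_simp
        _ ≤ η * μ0 θ := mul_le_mul_of_nonneg_left (hb θ h) hη0.le
  let y : A → Θ → ℝ := fun a θ => (1 - η) * (c a * x a θ) + κ * μ' a θ
  have hy : ∀ a θ, 0 ≤ y a θ := fun a θ => add_nonneg (mul_nonneg (by linarith) (hcx0 a θ))
    (mul_nonneg hκ0.le ((hμ' a).1.1 θ))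
  have hystr : ∀ a ∈ S, ∀ a', a' ≠ a → ∑ θ, u (a', θ) * y a θ < ∑ θ, u (a, θ) * y a θ := by
    intro a ha a' ha'
    have e : ∀ b, ∑ θ, u (b, θ) * y a θ =
        (1 - η) * c a * (∑ θ, u (b, θ) * x a θ) + κ * ∑ θ, u (b, θ) * μ' a θ := by
      intro b
      rw [Finset.mul_sum, Finset.mul_sum, ← Finset.sum_add_distrib]
      exact Finset.sum_congr rfl fun θ _ => by simp only [y]; ring
    rw [e, e]
    have h1 := mul_le_mul_of_nonneg_left (hxBR a a') (mul_nonneg (sub_nonneg.mpr hη1) (hc0 a))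
    have h2 := mul_lt_mul_of_pos_left (hμs a ha a' ha') hκ0
    linarith
  -- sums over S of the reduced decomposition
  have hSsum : ∀ θ, ∑ a ∈ S, c a * x a θ = μ0 θ := by
    intro θ
    rw [← hcx θ]
    exact Finset.sum_subset (Finset.subset_univ S) fun a _ ha => hnS a ha θ
  have hY : ∀ θ, r θ + ∑ a ∈ S, y a θ = μ0 θ := by
    intro θ
    simp only [y, Finset.sum_add_distrib, ← Finset.mul_sum, hSsum, r]
    ring
  -- values
  let V' : ℝ := ∑ a ∈ S, uS a * ∑ θ, c a * x a θ
  have hV' : ∑ a, c a * (uS a * ∑ θ, x a θ) = V' := by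
    simp only [V']
    rw [Finset.sum_subset (Finset.subset_univ S)]
    · refine Finset.sum_congr rfl fun a _ => ?_
      rw [← Finset.mul_sum]; ring
    · intro a _ ha
      simp [hnS a ha]
  have hmass : ∑ a ∈ S, ∑ θ, c a * x a θ = 1 := by
    rw [Finset.sum_comm]; simp only [hSsum]; exact hμ0.2
  have hV'C : V' ≤ C := by
    calc V' ≤ ∑ a ∈ S, C * ∑ θ, c a * x a θ := Finset.sum_le_sum fun a _ =>
          mul_le_mul_of_nonneg_right ((le_abs_self _).trans (hC a))
            (Finset.sum_nonneg fun θ _ => hcx0 a θ)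
      _ = C := by rw [← Finset.mul_sum, hmass, mul_one]
  have hrsum : ∑ θ, r θ = η - κ * S.card := by
    simp only [r, Finset.sum_sub_distrib, ← Finset.mul_sum, hμ0.2]
    rw [Finset.sum_comm]
    simp [hsum1]
  have hval : V' - ε ≤ -C * (∑ θ, r θ) + ∑ a ∈ S, uS a * ∑ θ, y a θ := by
    have e : ∑ a ∈ S, uS a * ∑ θ, y a θ = (1 - η) * V' + κ * ∑ a ∈ S, uS a := by
      simp only [V']
      rw [Finset.mul_sum, Finset.mul_sum, ← Finset.sum_add_distrib]
      refine Finset.sum_congr rfl fun a _ => ?_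
      simp only [y, Finset.sum_add_distrib, ← Finset.mul_sum, hsum1]
      ring
    have h1 : -C * S.card ≤ ∑ a ∈ S, uS a := by
      calc -C * S.card = ∑ a ∈ S, (-C) := by simp; ring
        _ ≤ _ := Finset.sum_le_sum fun a _ => (abs_le.mp (hC a)).1
    rw [e, hrsum]
    have h2 := mul_le_mul_of_nonneg_left h1 hκ0.le
    have h3 := mul_le_mul_of_nonneg_left hV'C hη0.le
    nlinarith
  -- embed into messages
  have hcard : Fintype.card (Option S) ≤ Fintype.card M := by
    have : 0 < Fintype.card Θ := Fintype.card_pos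
    rw [Fintype.card_option, Fintype.card_coe]; omega
  obtain ⟨e⟩ := Function.Embedding.nonempty_of_card_le hcard
  let Y : Option S → Θ → ℝ := fun o => o.elim r fun a => y a.1
  let G : Option S → ℝ := fun o => o.elim (-C) fun a => uS a.1
  let q : M → Θ → ℝ := Function.extend e Y fun _ _ => 0
  let g : M → ℝ := Function.extend e G fun _ => -C
  have hqe : ∀ o, q (e o) = Y o := fun o => e.injective.extend_apply _ _ o
  have hge : ∀ o, g (e o) = G o := fun o => e.injective.extend_apply _ _ o
  have hqn : ∀ m, m ∉ Set.range e → q m = fun _ => 0 := fun m hm =>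
    Function.extend_apply' _ _ _ (by simpa using hm)
  have hgn : ∀ m, m ∉ Set.range e → g m = -C := fun m hm =>
    Function.extend_apply' _ _ _ (by simpa using hm)
  refine ⟨q, g, ?_, ?_, ?_, ?_⟩
  · intro m θ
    by_cases hm : m ∈ Set.range e
    · obtain ⟨o, rfl⟩ := hm
      rw [hqe]
      cases o with
      | none => exact hr θ
      | some a => exact hy a.1 θ
    · rw [hqn m hm]
  · intro θ
    rw [← Fintype.sum_of_injective e e.injective (fun o => Y o θ) (fun m => q m θ)
      (fun m hm => by simp [hqn m hm]) (fun o => by simp [hqe]), Fintype.sum_option]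
    simp only [Y, Option.elim]
    rw [Finset.sum_coe_sort S (fun a => y a θ)]
    exact hY θ
  · intro m
    by_cases hm : m ∈ Set.range e
    · obtain ⟨o, rfl⟩ := hm
      rw [hqe, hge]
      cases o with
      | none => exact Or.inl rfl
      | some a => exact Or.inr ⟨a.1, rfl, hystr a.1 a.2⟩
    · exact Or.inl (hgn m hm)
  · rw [← Fintype.sum_of_injective e e.injective (fun o => G o * ∑ θ, Y o θ)
      (fun m => g m * ∑ θ, q m θ)
      (fun m hm => by simp [hqn m hm]) (fun o => by simp [hqe, hge]), Fintype.sum_option]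
    simp only [Y, G, Option.elim]
    rw [Finset.sum_coe_sort S (fun a => uS a * ∑ θ, y a θ)]
    linarith

lemma pbe_lower {A Θ M : Type*} [Fintype A] [Fintype Θ] [Fintype M] [Nonempty M]
    (uS : A → ℝ) (uR : A → Θ → ℝ) (μ0 : Θ → ℝ) (hμ0 : μ0 ∈ stdSimplex ℝ Θ)
    (C : ℝ) (hC : ∀ a, |uS a| ≤ C) (q : M → Θ → ℝ) (g : M → ℝ) (hq : ∀ m θ, 0 ≤ q m θ)
    (hqsum : ∀ θ, ∑ m, q m θ = μ0 θ)
    (hg : ∀ m, g m = -C ∨ ∃ a, g m = uS a ∧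
        ∀ a', a' ≠ a → ∑ θ, uR a' θ * q m θ < ∑ θ, uR a θ * q m θ) :
    ∀ᶠ χ in 𝓝[Set.Ico (0 : ℝ) 1] 1, ∀ s ∈ chiPBEPayoffs A M uS uR μ0 χ,
      χ * (∑ m, g m * ∑ θ, q m θ) - (1 - χ) * C ≤ s := by
  classical
  obtain ⟨B, hB0, hB⟩ := exists_bound fun k : A × Θ => uR k.1 k.2
  have hev : ∀ (m : M) (a a' : A), ∀ᶠ χ in 𝓝[Set.Ico (0 : ℝ) 1] 1,
      ∑ θ, uR a' θ * q m θ < ∑ θ, uR a θ * q m θ →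
      0 < χ * (∑ θ, uR a θ * q m θ - ∑ θ, uR a' θ * q m θ) - (1 - χ) * (2 * B) := by
    intro m a a'
    by_cases h : ∑ θ, uR a' θ * q m θ < ∑ θ, uR a θ * q m θ
    · have hc : Continuous fun χ : ℝ =>
          χ * (∑ θ, uR a θ * q m θ - ∑ θ, uR a' θ * q m θ) - (1 - χ) * (2 * B) := by fun_prop
      have := (hc.tendsto 1).eventually (lt_mem_nhds (a := 0) (by simpa using h))
      filter_upwards [nhdsWithin_le_nhds this] with χ hχ _ using hχ
    · exact Eventually.of_forall fun χ h' => absurd h' h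
  filter_upwards [self_mem_nhdsWithin,
    eventually_all.mpr fun m => eventually_all.mpr fun a => eventually_all.mpr (hev m a)]
    with χ hχ hgap s hs
  obtain ⟨ψ0, σ, α, β, ⟨_, h1, h2, h3, h4, h5, h6, _⟩, rfl⟩ := hs
  let ψ : Θ → M → ℝ := fun θ m =>
    if μ0 θ = 0 then (Pi.single (Classical.arbitrary M) 1 : M → ℝ) m else q m θ / μ0 θ
  have hψ : IsExperiment ψ := by
    intro θ
    by_cases h : μ0 θ = 0
    · simp only [ψ, h, if_true]
      exact single_mem_stdSimplex ℝ _
    · simp only [ψ, h, if_false]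
      exact ⟨fun m => div_nonneg (hq m θ) (hμ0.1 θ), by rw [← Finset.sum_div, hqsum, div_self h]⟩
  have hψq : ∀ θ m, μ0 θ * ψ θ m = q m θ := by
    intro θ m
    by_cases h : μ0 θ = 0
    · have : q m θ = 0 := (Finset.sum_eq_zero_iff_of_nonneg (fun m _ => hq m θ)).mp
        ((hqsum θ).trans h) m (Finset.mem_univ m)
      rw [this, h, zero_mul]
    · simp only [ψ, h, if_false]; field_simp
  refine le_trans ?_ (h4 ψ hψ)
  have hσ := h1 ψ hψ
  have hα := h2 ψ hψ
  let U : M → ℝ := fun m => ∑ a, uS a * α m ψ a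
  have hUC : ∀ m, -C ≤ U m := by
    intro m
    calc -C = ∑ a, -C * α m ψ a := by rw [← Finset.mul_sum, (hα m).2, mul_one]
      _ ≤ U m := Finset.sum_le_sum fun a _ =>
        mul_le_mul_of_nonneg_right (abs_le.mp (hC a)).1 ((hα m).1 a)
  have hwt : ∀ θ m, μ0 θ * (χ * ψ θ m + (1 - χ) * σ θ ψ m) =
      χ * q m θ + (1 - χ) * (μ0 θ * σ θ ψ m) := fun θ m => by rw [← hψq]; ring
  have hUg : ∀ m, g m ≤ U m := by
    intro m
    rcases hg m with h | ⟨a, hga, hstrict⟩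
    · rw [h]; exact hUC m
    have hzero : ∀ a', a' ≠ a → α m ψ a' = 0 := by
      intro a' ha'
      by_contra hne
      have hbr := h5 ψ hψ m a' hne a
      have hgp := hgap m a a' (hstrict a' ha')
      let P : ℝ := ∑ θ', μ0 θ' * (χ * ψ θ' m + (1 - χ) * σ θ' ψ m)
      have hP0 : 0 ≤ P := Finset.sum_nonneg fun θ _ => mul_nonneg (hμ0.1 θ)
        (add_nonneg (mul_nonneg hχ.1 ((hψ θ).1 m)) (mul_nonneg (by linarith [hχ.2]) ((hσ θ).1 m)))
      have e : ∀ b, (∑ θ, uR b θ * β m ψ θ) * P =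
          χ * (∑ θ, uR b θ * q m θ) + (1 - χ) * ∑ θ, uR b θ * (μ0 θ * σ θ ψ m) := by
        intro b
        rw [Finset.sum_mul, Finset.mul_sum, Finset.mul_sum, ← Finset.sum_add_distrib]
        refine Finset.sum_congr rfl fun θ _ => ?_
        rw [mul_assoc, h6 ψ hψ m θ, hwt]; ring
      have hmass : ∑ θ, μ0 θ * σ θ ψ m ≤ 1 := by
        rw [← hμ0.2]
        refine Finset.sum_le_sum fun θ _ => ?_
        have : σ θ ψ m ≤ 1 := by
          rw [← (hσ θ).2]
          exact Finset.single_le_sum (f := σ θ ψ) (fun m _ => (hσ θ).1 m) (Finset.mem_univ m)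
        exact mul_le_of_le_one_right (hμ0.1 θ) this
      have hbd : ∀ b, |∑ θ, uR b θ * (μ0 θ * σ θ ψ m)| ≤ B := by
        intro b
        calc |∑ θ, uR b θ * (μ0 θ * σ θ ψ m)| ≤ ∑ θ, |uR b θ * (μ0 θ * σ θ ψ m)| :=
              Finset.abs_sum_le_sum_abs _ _
          _ ≤ ∑ θ, B * (μ0 θ * σ θ ψ m) := Finset.sum_le_sum fun θ _ => by
              have h0 : 0 ≤ μ0 θ * σ θ ψ m := mul_nonneg (hμ0.1 θ) ((hσ θ).1 m)
              rw [abs_mul, abs_of_nonneg h0]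
              exact mul_le_mul_of_nonneg_right (hB (b, θ)) h0
          _ ≤ B := by rw [← Finset.mul_sum]; exact mul_le_of_le_one_right hB0 hmass
      have hmul := mul_le_mul_of_nonneg_right hbr hP0
      rw [e, e] at hmul
      have k1 := (abs_le.mp (hbd a)).1
      have k2 := (abs_le.mp (hbd a')).2
      have k3 : 0 ≤ 1 - χ := by linarith [hχ.2]
      nlinarith
    have hone : α m ψ a = 1 := by
      rw [← (hα m).2]
      exact (Finset.sum_eq_single a (fun a' _ h => hzero a' h) (by simp)).symm
    have : U m = uS a := by
      simp only [U]
      rw [Finset.sum_eq_single a (fun a' _ h => by rw [hzero a' h, mul_zero]) (by simp), hone, mul_one]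
    rw [this, hga]
  have hval : chiValue uS μ0 χ σ α ψ = χ * (∑ m, U m * ∑ θ, q m θ) +
      (1 - χ) * ∑ θ, μ0 θ * ∑ m, σ θ ψ m * U m := by
    have e1 : ∑ m, U m * ∑ θ, q m θ = ∑ θ, ∑ m, U m * q m θ := by
      rw [Finset.sum_comm]; simp only [Finset.mul_sum]
    rw [e1, Finset.mul_sum, Finset.mul_sum, ← Finset.sum_add_distrib]
    unfold chiValue
    refine Finset.sum_congr rfl fun θ _ => ?_
    rw [Finset.mul_sum, Finset.mul_sum, Finset.mul_sum, Finset.mul_sum, ← Finset.sum_add_distrib]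
    refine Finset.sum_congr rfl fun m _ => ?_
    change μ0 θ * ((χ * ψ θ m + (1 - χ) * σ θ ψ m) * U m) = _
    rw [← mul_assoc, hwt]
    ring
  rw [hval]
  have i1 : ∑ m, g m * ∑ θ, q m θ ≤ ∑ m, U m * ∑ θ, q m θ := Finset.sum_le_sum fun m _ =>
    mul_le_mul_of_nonneg_right (hUg m) (Finset.sum_nonneg fun θ _ => hq m θ)
  have i2 : -C ≤ ∑ θ, μ0 θ * ∑ m, σ θ ψ m * U m := by
    calc -C = ∑ θ, μ0 θ * -C := by rw [← Finset.sum_mul, hμ0.2, one_mul]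
      _ ≤ _ := Finset.sum_le_sum fun θ _ => mul_le_mul_of_nonneg_left (by
          calc -C = ∑ m, σ θ ψ m * -C := by rw [← Finset.sum_mul, (hσ θ).2, one_mul]
            _ ≤ _ := Finset.sum_le_sum fun m _ =>
              mul_le_mul_of_nonneg_left (hUC m) ((hσ θ).1 m)) (hμ0.1 θ)
  have j1 := mul_le_mul_of_nonneg_left i1 hχ.1
  have j2 := mul_le_mul_of_nonneg_left i2 (by linarith [hχ.2] : 0 ≤ 1 - χ)
  linarith

/-- **Generic strong robustness.** For finite `A`, `Θ`, and `M` with `|M| ≥ 2|Θ|`,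
there is a set of receiver utilities whose complement is Lebesgue-null and nowhere dense
such that, for every receiver utility in the set, every state-independent sender utility,
and every prior, the infimum sender `χ`-PBE payoff converges to the Bayesian persuasion
value `v̂(μ0)` as credibility `χ` tends to `1` from below. -/
theorem generic_strong_robustness
    (A Θ M : Type) [Fintype A] [Fintype Θ] [Fintype M]
    [Nonempty A] [Nonempty Θ] [Nonempty M]
    (hM : 2 * Fintype.card Θ ≤ Fintype.card M) :
    ∃ UR : Set (A × Θ → ℝ), volume URᶜ = 0 ∧ IsNowhereDense URᶜ ∧
      ∀ uR ∈ UR, ∀ uS : A → ℝ, ∀ μ0 ∈ stdSimplex ℝ Θ,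
        Tendsto (fun χ : ℝ => wStar A M uS (fun a θ => uR (a, θ)) μ0 χ)
          (nhdsWithin 1 (Set.Ico (0 : ℝ) 1))
          (nhds (vHatG uS (fun a θ => uR (a, θ)) μ0)) := by
  refine ⟨(badSet A Θ)ᶜ, by rw [compl_compl]; exact badSet_null A Θ,
    by rw [compl_compl]; exact badSet_nowhereDense A Θ, ?_⟩
  intro u hu uS μ0 hμ0
  obtain ⟨C, hC0, hC⟩ := exists_bound uS
  have hne : ∀ χ ∈ Set.Ico (0 : ℝ) 1,
      (chiPBEPayoffs A M uS (fun a θ => u (a, θ)) μ0 χ).Nonempty := fun χ hχ =>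
    exists_pbe uS _ μ0 hμ0 χ hχ.1 hχ.2.le
  have key : ∀ l < vHatG uS (fun a θ => u (a, θ)) μ0, ∀ᶠ χ in 𝓝[Set.Ico (0 : ℝ) 1] 1,
      ∃ l' > l, ∀ s ∈ chiPBEPayoffs A M uS (fun a θ => u (a, θ)) μ0 χ, l' ≤ s := by
    intro l hl
    have hI : (IPolF μ0).Nonempty := by
      refine ⟨⟨Measure.dirac ⟨μ0, hμ0⟩, inferInstance⟩, fun θ => ?_⟩
      simp
    obtain ⟨_, ⟨p, hp, rfl⟩, hlp⟩ := exists_lt_of_lt_csSup (hI.image _) hl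
    obtain ⟨x, hx, hxsum, hxBR, hval⟩ := decompose uS (fun a θ => u (a, θ)) μ0 p hp
    simp only [hval] at hlp
    obtain ⟨q, g, hq, hqsum, hg, hV⟩ := good_joint (M := M) hM uS u hu μ0 hμ0 C hC0 hC x hx hxsum
      hxBR (((∑ a, uS a * ∑ θ, x a θ) - l) / 2) (by linarith)
    have hlow := pbe_lower uS (fun a θ => u (a, θ)) μ0 hμ0 C hC q g hq hqsum hg
    have hc : Continuous fun χ : ℝ => χ * (∑ m, g m * ∑ θ, q m θ) - (1 - χ) * C := by fun_prop
    have hlim := (hc.tendsto 1).eventually (lt_mem_nhds (a := l) (by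
      simp only [one_mul, sub_self, zero_mul, sub_zero]; linarith))
    filter_upwards [hlow, nhdsWithin_le_nhds hlim] with χ h1 h2
    exact ⟨_, h2, h1⟩
  rw [tendsto_order]
  constructor
  · intro l hl
    filter_upwards [self_mem_nhdsWithin, key l hl] with χ hχ ⟨l', hl', h⟩
    exact lt_of_lt_of_le hl' (le_csInf (hne χ hχ) h)
  · intro l hl
    filter_upwards [self_mem_nhdsWithin,
      key (vHatG uS (fun a θ => u (a, θ)) μ0 - 1) (by linarith)] with χ hχ ⟨l', _, h⟩
    obtain ⟨s, hs⟩ := hne χ hχ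
    refine lt_of_le_of_lt (csInf_le ⟨l', h⟩ hs) (lt_of_le_of_lt ?_ hl)
    exact pbe_le_vHat uS _ μ0 hμ0 χ hχ.1 hχ.2.le s hs
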